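/- arXiv:1204.6692 — 2 statements merged into one kernel-verified Lean document; each statement's English description precedes it below -/
import Mathlib

section
/- Let f_0 ∈ F_2[x] be any monic irreducible polynomial of degree n ≥ 1, and write n = 2^l · m with m odd and l ≥ 0. Then there exist an integer s with 0 ≤ s ≤ l+3 and an infinite sequence (f_i)_{i ≥ 0} of monic irreducible polynomials in F_2[x], starting from the given f_0, such that f_{i+1} divides f_i^Q for every i ≥ 0, and for every i ≥ s one has f_{i+1} = f_i^Q, so that deg f_{i+1} = 2 · deg f_i for all i ≥ s. -/
open Polynomial

noncomputable def Qtrans (f : Polynomial (ZMod 2)) : Polynomial (ZMod 2) :=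
  ∑ i ∈ Finset.range (f.natDegree + 1),
    C (f.coeff i) * X ^ (f.natDegree - i) * (X ^ 2 + 1) ^ i

/-!
The roots of `f^Q` are the preimages under `θ y = y + y⁻¹` of the roots of `f`, and the degree of
an element of `𝔽̄₂` is its period under Frobenius, so one looks for a backward `θ`-orbit of a root
`x` of `f₀` along which this period eventually doubles. By Artin–Schreier, if `x` lies in
`𝔽_{2^n}` then a preimage `y` stays in `𝔽_{2^n}` when `x⁻¹` has trace `0`, and otherwise is sent
to `y⁻¹` by the `n`-th power of Frobenius. Hence once `x` and `x⁻¹` both have trace `1`, every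
preimage has twice the degree and again has this property.

The delay before this happens is bounded by means of the curve `y² + xy = x³ + 1`, on which
doubling acts on abscissae as `θ` followed by squaring, and whose `𝔽_{2^n}`-points have as
abscissae `0` and the `x ≠ 0` such that `x` and `x⁻¹` have the same trace. If the delay is long,
some pair `y ≠ y⁻¹` lifts to `θ^k z = y`, `θ^k w = y⁻¹` with `z`, `w` abscissae of rational points
`P`, `R`. Then `2^k P` and `2^k R` differ up to sign by a point of order two, so `P + R` or
`P - R` has order exactly `2^(k+1)`. The abscissa of such a point has degree `2^(k-1)`, which forces
`2^(k-1) ∣ n`.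
-/

open Function

section FrobTrace

variable {R : Type*} [CommRing R] (p : ℕ) [ExpChar R p]

/-- The truncated trace `x + x ^ p + ⋯ + x ^ p ^ (n - 1)`. On the fixed points of the `n`-th power
of Frobenius it is the absolute trace. -/
noncomputable def frobTrace (n : ℕ) : R →+ R where
  toFun := birkhoffSum (frobenius R p) id n
  map_zero' := by simp [birkhoffSum]
  map_add' x y := by simp [birkhoffSum, Finset.sum_add_distrib]

lemma frobTrace_nat_add (m n : ℕ) (x : R) :
    frobTrace p (m + n) x = frobTrace p m x + frobTrace p n ((frobenius R p)^[m] x) :=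
  birkhoffSum_add _ _ m n x

lemma frobTrace_frobenius_sub_self (n : ℕ) (x : R) :
    frobTrace p n (frobenius R p x - x) = (frobenius R p)^[n] x - x := by
  rw [map_sub]
  exact birkhoffSum_apply_sub_birkhoffSum _ id n x

lemma frobenius_frobTrace (n : ℕ) (x : R) :
    frobenius R p (frobTrace p n x) = frobTrace p n (frobenius R p x) := by
  simp [frobTrace, birkhoffSum, ← iterate_succ_apply, iterate_succ_apply']

variable {p} {n : ℕ} {x : R}

lemma frobTrace_frobenius (hx : IsPeriodicPt (frobenius R p) n x) :
    frobTrace p n (frobenius R p x) = frobTrace p n x := by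
  rw [← sub_eq_zero, ← map_sub, frobTrace_frobenius_sub_self, hx.eq, sub_self]

lemma frobTrace_mul (hx : IsPeriodicPt (frobenius R p) n x) (c : ℕ) :
    frobTrace p (n * c) x = c • frobTrace p n x := by
  induction c with
  | zero => simp [frobTrace]
  | succ c ih => rw [mul_add_one, frobTrace_nat_add, ih, (hx.mul_const c).eq, succ_nsmul]

lemma frobTrace_eq_zero_or_one [IsDomain R] {x : R} [CharP R 2]
    (hx : IsPeriodicPt (frobenius R 2) n x) : frobTrace 2 n x = 0 ∨ frobTrace 2 n x = 1 := by
  have hfix := (frobenius_frobTrace 2 n x).trans (frobTrace_frobenius hx)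
  rw [frobenius_def, sq] at hfix
  exact IsIdempotentElem.iff_eq_zero_or_one.1 hfix

end FrobTrace

lemma exists_quadratic_root {K : Type*} [Field K] [IsAlgClosed K] (b c : K) :
    ∃ y, y ^ 2 + b * y + c = 0 := by
  have hdeg : (C 1 * X ^ 2 + C b * X + C c : K[X]).degree = 2 := degree_quadratic one_ne_zero
  obtain ⟨y, hy⟩ := IsAlgClosed.exists_root _ (by rw [hdeg]; decide)
  exact ⟨y, by simpa [IsRoot] using hy⟩

/-- The Joukowsky map, written `θ` below: the roots of the Q-transform of `f` are the preimages of
the roots of `f`. Since `0⁻¹ = 0`, it sends `0` to `0` instead of having a pole there. -/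
def joukowsky {K : Type*} [Field K] (x : K) : K := x + x⁻¹

local notation "θ" => joukowsky

section Joukowsky

variable {K : Type*} [Field K]

lemma joukowsky_inv (x : K) : θ x⁻¹ = θ x := by
  rw [joukowsky, joukowsky, inv_inv, add_comm]

lemma joukowsky_zero : θ (0 : K) = 0 := by
  simp [joukowsky]

lemma ne_zero_of_joukowsky_iterate_ne_zero {k : ℕ} {x : K} (h : θ^[k] x ≠ 0) : x ≠ 0 := by
  rintro rfl
  exact h (iterate_fixed joukowsky_zero k)

lemma map_joukowsky {L : Type*} [Field L] (f : K →+* L) (x : K) : f (θ x) = θ (f x) := by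
  simp [joukowsky]

lemma sq_add_one_eq_mul_joukowsky {x : K} (hx : x ≠ 0) : x ^ 2 + 1 = x * θ x := by
  rw [joukowsky]
  field_simp

lemma joukowsky_add_joukowsky {x y : K} (hx : x ≠ 0) (hy : y ≠ 0) :
    θ x + θ y = (x + y) * (x * y + 1) / (x * y) := by
  rw [joukowsky, joukowsky]
  field_simp
  ring

lemma joukowsky_surjective [IsAlgClosed K] (x : K) : ∃ y, y ≠ 0 ∧ θ y = x := by
  obtain ⟨y, hy⟩ := exists_quadratic_root (-x) (1 : K)
  have hy0 : y ≠ 0 := by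
    rintro rfl
    simp at hy
  refine ⟨y, hy0, mul_left_cancel₀ hy0 ?_⟩
  rw [← sq_add_one_eq_mul_joukowsky hy0]
  linear_combination hy

end Joukowsky

section CharTwo

variable {K : Type*} [Field K] [CharP K 2]

local notation "φ" => frobenius K 2

lemma isPeriodicPt_frobenius_inv {n : ℕ} {x : K} (hx : IsPeriodicPt φ n x) :
    IsPeriodicPt φ n x⁻¹ :=
  hx.map (map_inv₀ φ · |>.symm)

lemma isPeriodicPt_frobenius_joukowsky {n : ℕ} {x : K} (hx : IsPeriodicPt φ n x) :
    IsPeriodicPt φ n (θ x) :=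
  hx.map (map_joukowsky φ · |>.symm)

lemma joukowsky_one : θ (1 : K) = 0 := by
  rw [joukowsky, inv_one, CharTwo.add_self_eq_zero]

lemma joukowsky_eq_zero_iff {x : K} : θ x = 0 ↔ x = x⁻¹ :=
  CharTwo.add_eq_zero

lemma eq_one_of_joukowsky_eq_zero {x : K} (hx : x ≠ 0) (h : θ x = 0) : x = 1 := by
  have hsq : x ^ 2 + 1 = 0 := by rw [sq_add_one_eq_mul_joukowsky hx, h, mul_zero]
  exact CharTwo.sq_injective (by simpa [CharTwo.add_eq_zero] using hsq)

/-- `x` lies in `𝔽_{2^n}`, where `x` and `x⁻¹` have absolute traces `a` and `b`. -/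
structure HasTraces (n : ℕ) (a b x : K) : Prop where
  isPeriodicPt : IsPeriodicPt φ n x
  frobTrace_eq : frobTrace 2 n x = a
  frobTrace_inv_eq : frobTrace 2 n x⁻¹ = b

/-- `x` and `x⁻¹` both have absolute trace `1` over some finite field containing `x`. Passing to
preimages under `θ` preserves this property and doubles the degree. -/
def HasUnitTraces (x : K) : Prop := ∃ n, HasTraces n 1 1 x

/-- `x` is obtained from an element with `HasUnitTraces` by applying `θ` at most `k` times. -/
def UnitTracesWithin (k : ℕ) (x : K) : Prop := ∃ s ≤ k, ∃ y, HasUnitTraces y ∧ θ^[s] y = x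

/-- `x` and `x⁻¹` have equal absolute traces over `𝔽_{2^n}`: equivalently, `x` is the abscissa of an
`𝔽_{2^n}`-rational point of the curve `y² + xy = x³ + 1`. -/
def IsRationalAbscissa (n : ℕ) (x : K) : Prop := ∃ a, HasTraces n a a x

variable {n : ℕ} {a b x y : K}

namespace HasTraces

lemma inv (h : HasTraces n a b x) : HasTraces n b a x⁻¹ :=
  ⟨isPeriodicPt_frobenius_inv h.isPeriodicPt, h.frobTrace_inv_eq, by
    rw [inv_inv, h.frobTrace_eq]⟩

lemma left_eq_zero_or_one (h : HasTraces n a b x) : a = 0 ∨ a = 1 :=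
  h.frobTrace_eq ▸ frobTrace_eq_zero_or_one h.isPeriodicPt

lemma ne_zero (h : HasTraces n 1 b x) : x ≠ 0 := by
  rintro rfl
  simpa using h.frobTrace_eq

lemma ne_zero_of_inv (h : HasTraces n a 1 x) : x ≠ 0 :=
  inv_eq_zero.not.1 h.inv.ne_zero

lemma double (h : HasTraces n a b x) : HasTraces (n + n) 0 0 x where
  isPeriodicPt := h.isPeriodicPt.add h.isPeriodicPt
  frobTrace_eq := by
    rw [frobTrace_nat_add, h.isPeriodicPt.eq, CharTwo.add_self_eq_zero]
  frobTrace_inv_eq := by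
    rw [frobTrace_nat_add, h.inv.isPeriodicPt.eq, CharTwo.add_self_eq_zero]

end HasTraces

lemma HasUnitTraces.ne_zero (h : HasUnitTraces x) : x ≠ 0 :=
  h.choose_spec.ne_zero

lemma hasUnitTraces_one : HasUnitTraces (1 : K) :=
  ⟨1, map_one φ, by simp [frobTrace], by simp [frobTrace]⟩

lemma UnitTracesWithin.joukowsky {k : ℕ} (h : UnitTracesWithin k y) :
    UnitTracesWithin (k + 1) (θ y) := by
  obtain ⟨s, hs, g, hg, rfl⟩ := h
  exact ⟨s + 1, by omega, g, hg, iterate_succ_apply' ..⟩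

lemma UnitTracesWithin.mono {k l : ℕ} (hkl : k ≤ l) (h : UnitTracesWithin k x) :
    UnitTracesWithin l x := by
  obtain ⟨s, hs, hg⟩ := h
  exact ⟨s, hs.trans hkl, hg⟩

section Preimages

lemma iterate_frobenius_of_isPeriodicPt_joukowsky (hper : IsPeriodicPt φ n (θ y)) (h0 : θ y ≠ 0) :
    φ^[n] y = y + θ y * frobTrace 2 n (θ y)⁻¹ := by
  have hy : y ≠ 0 := ne_zero_of_joukowsky_iterate_ne_zero (k := 1) h0
  -- `y / θ y` solves an Artin–Schreier equation over the field generated by `θ y`.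
  have hAS : φ (y / θ y) - y / θ y = φ (θ y)⁻¹ := by
    rw [frobenius_def, frobenius_def]
    field_simp
    linear_combination sq_add_one_eq_mul_joukowsky hy - CharTwo.two_eq_zero (R := K)
  have hiter := frobTrace_frobenius_sub_self 2 n (y / θ y)
  rw [hAS, frobTrace_frobenius (isPeriodicPt_frobenius_inv hper), ← coe_iterateFrobenius, map_div₀,
    coe_iterateFrobenius, hper.eq] at hiter
  rw [hiter]
  field_simp
  ring

lemma HasTraces.isPeriodicPt_of_joukowsky (h : HasTraces n a 0 (θ y)) (h0 : θ y ≠ 0) :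
    IsPeriodicPt φ n y := by
  rw [IsPeriodicPt, IsFixedPt, iterate_frobenius_of_isPeriodicPt_joukowsky h.isPeriodicPt h0,
    h.frobTrace_inv_eq, mul_zero, add_zero]

lemma HasTraces.iterate_frobenius_eq_inv (h : HasTraces n a 1 (θ y)) : φ^[n] y = y⁻¹ := by
  rw [iterate_frobenius_of_isPeriodicPt_joukowsky h.isPeriodicPt h.ne_zero_of_inv,
    h.frobTrace_inv_eq, mul_one, joukowsky, CharTwo.add_cancel_left]

lemma HasTraces.isRationalAbscissa_of_joukowsky (h : HasTraces n 0 0 (θ y)) (h0 : θ y ≠ 0) :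
    IsRationalAbscissa n y := by
  have hsum := h.frobTrace_eq
  rw [joukowsky, map_add, CharTwo.add_eq_zero] at hsum
  exact ⟨_, h.isPeriodicPt_of_joukowsky h0, hsum, rfl⟩

lemma HasTraces.of_joukowsky (h : HasTraces n a 1 (θ y)) : HasTraces (n + n) a a y := by
  have hinv := h.iterate_frobenius_eq_inv
  have hinv' : φ^[n] y⁻¹ = y := by
    rw [← coe_iterateFrobenius, map_inv₀, coe_iterateFrobenius, hinv, inv_inv]
  refine ⟨?_, ?_, ?_⟩
  · rw [IsPeriodicPt, IsFixedPt, iterate_add_apply, hinv, hinv']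
  · rw [frobTrace_nat_add, hinv, ← map_add, ← h.frobTrace_eq, joukowsky]
  · rw [frobTrace_nat_add, hinv', ← map_add, ← h.frobTrace_eq, joukowsky, add_comm]

lemma HasTraces.exists_minimalPeriod (h : HasTraces n a 1 x) :
    ∃ b, HasTraces (minimalPeriod φ x) b 1 x := by
  have hper := isPeriodicPt_minimalPeriod φ x
  have hinv := isPeriodicPt_frobenius_inv hper
  refine ⟨_, hper, rfl, (frobTrace_eq_zero_or_one hinv).resolve_left fun h0 => ?_⟩
  obtain ⟨c, hc⟩ := h.isPeriodicPt.minimalPeriod_dvd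
  have htr := h.frobTrace_inv_eq
  rw [hc, frobTrace_mul hinv, h0, smul_zero] at htr
  exact zero_ne_one htr

lemma HasTraces.minimalPeriod_eq_two_mul (h : HasTraces n a 1 (θ y)) :
    minimalPeriod φ y = 2 * minimalPeriod φ (θ y) := by
  obtain ⟨b, htr⟩ := h.exists_minimalPeriod
  set d := minimalPeriod φ (θ y)
  have hd_pos : 0 < d := by
    refine Nat.pos_of_ne_zero fun h0 => zero_ne_one (α := K) ?_
    simpa [h0, frobTrace] using htr.frobTrace_inv_eq
  have hnot : ¬ IsPeriodicPt φ d y := fun hy =>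
    htr.ne_zero_of_inv
      (joukowsky_eq_zero_iff.2 (hy.eq.symm.trans htr.iterate_frobenius_eq_inv))
  obtain ⟨k, hk⟩ : d ∣ minimalPeriod φ y :=
    (isPeriodicPt_frobenius_joukowsky (isPeriodicPt_minimalPeriod _ _)).minimalPeriod_dvd
  have hk_dvd : k ∣ 2 := by
    refine Nat.dvd_of_mul_dvd_mul_left hd_pos ?_
    rw [← hk, mul_two]
    exact htr.of_joukowsky.isPeriodicPt.minimalPeriod_dvd
  rcases (Nat.dvd_prime Nat.prime_two).1 hk_dvd with rfl | rfl
  · rw [mul_one] at hk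
    exact absurd (hk ▸ isPeriodicPt_minimalPeriod φ y) hnot
  · rw [hk, mul_comm]

lemma HasUnitTraces.of_joukowsky (h : HasUnitTraces (θ y)) : HasUnitTraces y :=
  let ⟨n, hn⟩ := h
  ⟨n + n, hn.of_joukowsky⟩

lemma HasUnitTraces.minimalPeriod_eq_two_mul (h : HasUnitTraces (θ y)) :
    minimalPeriod φ y = 2 * minimalPeriod φ (θ y) :=
  h.choose_spec.minimalPeriod_eq_two_mul

lemma HasUnitTraces.of_joukowsky_iterate (k : ℕ) (h : HasUnitTraces (θ^[k] y)) :
    HasUnitTraces y := by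
  induction k generalizing y with
  | zero => exact h
  | succ k ih => exact (ih h).of_joukowsky

lemma HasUnitTraces.minimalPeriod_eq_two_pow_mul (k : ℕ) (h : HasUnitTraces (θ^[k] y)) :
    minimalPeriod φ y = 2 ^ k * minimalPeriod φ (θ^[k] y) := by
  induction k generalizing y with
  | zero => rw [pow_zero, one_mul, iterate_zero_apply]
  | succ k ih =>
    rw [iterate_succ_apply] at h ⊢
    rw [(h.of_joukowsky_iterate k).minimalPeriod_eq_two_mul, ih h]
    ring

lemma minimalPeriod_eq_two_pow_of_joukowsky_iterate {k : ℕ} (hk : θ^[k] x ≠ 0)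
    (hk' : θ^[k + 1] x = 0) : minimalPeriod φ x = 2 ^ k := by
  rw [iterate_succ_apply'] at hk'
  have hone : θ^[k] x = 1 := eq_one_of_joukowsky_eq_zero hk hk'
  rw [HasUnitTraces.minimalPeriod_eq_two_pow_mul k (hone ▸ hasUnitTraces_one), hone,
    minimalPeriod_eq_one_iff_isFixedPt.2 (map_one φ), mul_one]

end Preimages

section SumDiff

/-- `u` and `v` are the abscissae of `P + Q` and `P - Q`, where `P` and `Q` are points of the curve
`y² + xy = x³ + 1` with abscissae `x` and `y`. The addition law gives the elementary symmetric
functions of `u` and `v`. -/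
structure IsSumDiff (x y u v : K) : Prop where
  add_mul : (u + v) * (x + y) ^ 2 = x * y
  mul_mul : u * v * (x + y) ^ 2 = (x * y + 1) ^ 2

variable {u v w z : K}

lemma joukowsky_mul_joukowsky (hx : x ≠ 0) (hy : y ≠ 0) :
    θ x * θ y = ((x * y + 1) ^ 2 + (x + y) ^ 2) / (x * y) := by
  rw [joukowsky, joukowsky]
  field_simp
  linear_combination -2 * x * y * CharTwo.two_eq_zero (R := K)

lemma mul_add_one_ne_zero_of_joukowsky_ne (h : θ x ≠ θ y) : x * y + 1 ≠ 0 := by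
  intro hxy
  refine h ?_
  rw [eq_inv_of_mul_eq_one_left (CharTwo.add_eq_zero.1 hxy), joukowsky_inv]

namespace IsSumDiff

lemma mul_ne_zero {K : Type*} [Field K] {x y u v : K} (h : IsSumDiff x y u v)
    (hxy : x * y + 1 ≠ 0) : u * v ≠ 0 :=
  left_ne_zero_of_mul (h.mul_mul ▸ pow_ne_zero 2 hxy)

/-- Doubling acts on abscissae as `θ` followed by squaring, and commutes with addition. -/
lemma joukowsky (h : IsSumDiff x y u v) (hx : x ≠ 0) (hy : y ≠ 0) (hθ : θ x ≠ θ y) :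
    IsSumDiff (θ x) (θ y) (θ u) (θ v) := by
  have hadd : x + y ≠ 0 := fun h0 => hθ (congrArg _ (CharTwo.add_eq_zero.1 h0))
  have hxy := mul_add_one_ne_zero_of_joukowsky_ne hθ
  have huv := h.mul_ne_zero hxy
  have hu := left_ne_zero_of_mul huv
  have hv := right_ne_zero_of_mul huv
  have hsum : u + v = x * y / (x + y) ^ 2 := eq_div_of_mul_eq (pow_ne_zero 2 hadd) h.add_mul
  have hprod : u * v = (x * y + 1) ^ 2 / (x + y) ^ 2 :=
    eq_div_of_mul_eq (pow_ne_zero 2 hadd) h.mul_mul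
  constructor
  · rw [joukowsky_add_joukowsky hu hv, joukowsky_add_joukowsky hx hy,
      joukowsky_mul_joukowsky hx hy, hsum, hprod]
    field_simp
  · have hsq : (θ x * θ y + 1) ^ 2 = (θ x * θ y) ^ 2 + 1 := by rw [CharTwo.add_sq, one_pow]
    rw [hsq, joukowsky_mul_joukowsky hu hv, joukowsky_add_joukowsky hx hy,
      joukowsky_mul_joukowsky hx hy, hsum, hprod]
    field_simp

lemma joukowsky_iterate (k : ℕ) (h : IsSumDiff x y u v) (hx : θ^[k] x ≠ 0) (hy : θ^[k] y ≠ 0)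
    (hxy : θ^[k] x ≠ θ^[k] y) : IsSumDiff (θ^[k] x) (θ^[k] y) (θ^[k] u) (θ^[k] v) := by
  induction k generalizing x y u v with
  | zero => exact h
  | succ k ih =>
    exact ih (h.joukowsky (ne_zero_of_joukowsky_iterate_ne_zero hx)
      (ne_zero_of_joukowsky_iterate_ne_zero hy) fun hθ => hxy (congrArg θ^[k] hθ)) hx hy hxy

end IsSumDiff

variable [IsAlgClosed K]

/-- The sum and the difference of two rational points are rational. -/
lemma exists_isSumDiff_of_isRationalAbscissa (hx : x ≠ 0) (hy : y ≠ 0) (hne : x ≠ y)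
    (hrx : IsRationalAbscissa n x) (hry : IsRationalAbscissa n y) :
    ∃ u v : K, IsPeriodicPt φ n u ∧ IsPeriodicPt φ n v ∧ IsSumDiff x y u v := by
  obtain ⟨a, ha⟩ := hrx
  obtain ⟨b, hb⟩ := hry
  have hadd : x + y ≠ 0 := mt CharTwo.add_eq_zero.1 hne
  obtain ⟨w, hw⟩ := exists_quadratic_root 1 ((θ x + θ y) ^ 2)
  rw [one_mul, CharTwo.add_eq_zero] at hw
  have hw_per : IsPeriodicPt φ n w := by
    have htr : frobTrace 2 n (θ x + θ y) = 0 := by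
      simp only [joukowsky, map_add, ha.frobTrace_eq, ha.frobTrace_inv_eq, hb.frobTrace_eq,
        hb.frobTrace_inv_eq, CharTwo.add_self_eq_zero]
    have hiter := frobTrace_frobenius_sub_self 2 n w
    rw [frobenius_def, CharTwo.sub_eq_add, hw, ← frobenius_def, ← frobenius_frobTrace, htr,
      map_zero] at hiter
    exact sub_eq_zero.1 hiter.symm
  have hper : ∀ t, IsPeriodicPt φ n t → IsPeriodicPt φ n (t * (x * y) / (x + y) ^ 2) := by
    intro t ht
    rw [IsPeriodicPt, IsFixedPt, ← coe_iterateFrobenius, map_div₀, map_pow, map_add, map_mul,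
      map_mul, coe_iterateFrobenius, ht.eq, ha.isPeriodicPt.eq, hb.isPeriodicPt.eq]
  have hw_per' : IsPeriodicPt φ n (w + 1) := by
    rw [IsPeriodicPt, IsFixedPt, iterate_map_add, iterate_map_one, hw_per.eq]
  refine ⟨_, _, hper w hw_per, hper (w + 1) hw_per', ?_, ?_⟩
  · field_simp
    linear_combination w * CharTwo.two_eq_zero (R := K)
  · rw [joukowsky_add_joukowsky hx hy] at hw
    field_simp at hw ⊢
    linear_combination hw

lemma two_pow_dvd_of_joukowsky_iterate_eq_inv {k : ℕ} (hz : IsRationalAbscissa n z)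
    (hw : IsRationalAbscissa n w) (hzy : θ^[k + 1] z = y) (hwy : θ^[k + 1] w = y⁻¹)
    (hy : θ y ≠ 0) : 2 ^ k ∣ n := by
  have hy0 : y ≠ 0 := ne_zero_of_joukowsky_iterate_ne_zero (k := 1) hy
  have hz0 : θ^[k + 1] z ≠ 0 := hzy ▸ hy0
  have hw0 : θ^[k + 1] w ≠ 0 := hwy ▸ inv_ne_zero hy0
  have hne : θ^[k + 1] z ≠ θ^[k + 1] w := by
    rw [hzy, hwy]
    exact mt joukowsky_eq_zero_iff.2 hy
  obtain ⟨u, v, hu, hv, huv⟩ := exists_isSumDiff_of_isRationalAbscissa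
    (ne_zero_of_joukowsky_iterate_ne_zero hz0) (ne_zero_of_joukowsky_iterate_ne_zero hw0)
    (fun h => hne (congrArg _ h)) hz hw
  have hlast : θ^[k + 1] u * θ^[k + 1] v = 0 := by
    have hmul := (huv.joukowsky_iterate (k + 1) hz0 hw0 hne).mul_mul
    rw [hzy, hwy, mul_inv_cancel₀ hy0, CharTwo.add_self_eq_zero, zero_pow two_ne_zero] at hmul
    refine (mul_eq_zero.1 hmul).resolve_right (pow_ne_zero 2 (mt CharTwo.add_eq_zero.1 ?_))
    exact mt joukowsky_eq_zero_iff.2 hy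
  have hprev : θ^[k] u * θ^[k] v ≠ 0 := by
    rw [iterate_succ_apply'] at hz0 hw0 hne
    rw [iterate_succ_apply'] at hne
    exact (huv.joukowsky_iterate k (ne_zero_of_joukowsky_iterate_ne_zero (k := 1) hz0)
      (ne_zero_of_joukowsky_iterate_ne_zero (k := 1) hw0)
      fun h => hne (congrArg _ h)).mul_ne_zero (mul_add_one_ne_zero_of_joukowsky_ne hne)
  rcases mul_eq_zero.1 hlast with h | h
  · rw [← minimalPeriod_eq_two_pow_of_joukowsky_iterate (left_ne_zero_of_mul hprev) h]
    exact hu.minimalPeriod_dvd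
  · rw [← minimalPeriod_eq_two_pow_of_joukowsky_iterate (right_ne_zero_of_mul hprev) h]
    exact hv.minimalPeriod_dvd

end SumDiff

section Reaching

variable [IsAlgClosed K] {l : ℕ}

lemma IsRationalAbscissa.hasUnitTraces_or_exists_joukowsky_eq (h : IsRationalAbscissa n x)
    (hx : x ≠ 0) : HasUnitTraces x ∨ ∃ y, IsRationalAbscissa n y ∧ θ y = x := by
  obtain ⟨a, ha⟩ := h
  rcases ha.left_eq_zero_or_one with rfl | rfl
  · obtain ⟨y, -, rfl⟩ := joukowsky_surjective x
    exact Or.inr ⟨y, ha.isRationalAbscissa_of_joukowsky hx, rfl⟩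
  · exact Or.inl ⟨n, ha⟩

lemma IsRationalAbscissa.unitTracesWithin_or_exists_joukowsky_iterate_eq
    (h : IsRationalAbscissa n x) (hx : x ≠ 0) (k : ℕ) :
    UnitTracesWithin k x ∨ ∃ z, IsRationalAbscissa n z ∧ θ^[k + 1] z = x := by
  induction k with
  | zero =>
    exact (h.hasUnitTraces_or_exists_joukowsky_eq hx).imp_left fun hg => ⟨0, le_rfl, x, hg, rfl⟩
  | succ k ih =>
    rcases ih with hwithin | ⟨z, hz, rfl⟩
    · exact Or.inl (hwithin.mono k.le_succ)
    rcases hz.hasUnitTraces_or_exists_joukowsky_eq (ne_zero_of_joukowsky_iterate_ne_zero hx) with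
      hg | ⟨w, hw, rfl⟩
    · exact Or.inl ⟨k + 1, le_rfl, z, hg, rfl⟩
    · exact Or.inr ⟨w, hw, rfl⟩

lemma HasTraces.unitTracesWithin_of_zero_zero (hn : ¬ 2 ^ (l + 1) ∣ n) (h : HasTraces n 0 0 x)
    (hx : x ≠ 0) : UnitTracesWithin (l + 2) x := by
  obtain ⟨y, hy, rfl⟩ := joukowsky_surjective x
  have hry := h.isRationalAbscissa_of_joukowsky hx
  have hry' : IsRationalAbscissa n y⁻¹ := by
    rw [← joukowsky_inv] at h hx
    exact h.isRationalAbscissa_of_joukowsky hx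
  rcases hry.unitTracesWithin_or_exists_joukowsky_iterate_eq hy (l + 1) with hwithin | ⟨z, hz, hzy⟩
  · exact hwithin.joukowsky
  rcases hry'.unitTracesWithin_or_exists_joukowsky_iterate_eq (inv_ne_zero hy) (l + 1) with
    hwithin | ⟨w, hw, hwy⟩
  · exact joukowsky_inv y ▸ hwithin.joukowsky
  · exact absurd (two_pow_dvd_of_joukowsky_iterate_eq_inv hz hw hzy hwy hx) hn

lemma HasTraces.exists_joukowsky_eq (h : HasTraces n 1 0 x) : ∃ y, HasTraces n 1 0 y ∧ θ y = x := by
  obtain ⟨y, -, rfl⟩ := joukowsky_surjective x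
  have hper := h.isPeriodicPt_of_joukowsky h.ne_zero
  have hsum := h.frobTrace_eq
  rw [joukowsky, map_add] at hsum
  rcases frobTrace_eq_zero_or_one hper with htr | htr <;> rw [htr] at hsum
  · exact ⟨y⁻¹, HasTraces.inv ⟨hper, htr, by simpa using hsum⟩, joukowsky_inv y⟩
  · exact ⟨y, ⟨hper, htr, by simpa using hsum⟩, rfl⟩

lemma HasTraces.exists_joukowsky_iterate_eq (h : HasTraces n 1 0 x) (k : ℕ) :
    ∃ z, HasTraces n 1 0 z ∧ θ^[k] z = x := by
  induction k with
  | zero => exact ⟨x, h, rfl⟩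
  | succ k ih =>
    obtain ⟨z, hz, rfl⟩ := ih
    obtain ⟨w, hw, rfl⟩ := hz.exists_joukowsky_eq
    exact ⟨w, hw, rfl⟩

/-- Over `𝔽_{2^(2n)}` the preimages of `x` become rational, while `x⁻¹` has an infinite backward
orbit inside `𝔽_{2^n}`. -/
lemma HasTraces.unitTracesWithin_of_zero_one (hn : ¬ 2 ^ (l + 1) ∣ n) (h : HasTraces n 0 1 x) :
    UnitTracesWithin (l + 2) x := by
  obtain ⟨y, hy, rfl⟩ := joukowsky_surjective x
  have hry : IsRationalAbscissa (n + n) y := ⟨0, h.of_joukowsky⟩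
  rcases hry.unitTracesWithin_or_exists_joukowsky_iterate_eq hy (l + 1) with hwithin | ⟨z, hz, hzy⟩
  · exact hwithin.joukowsky
  obtain ⟨w, hw, hwy⟩ := h.inv.exists_joukowsky_iterate_eq (l + 3)
  have hθθ : θ (θ y) ≠ 0 := by
    intro h0
    have := h.frobTrace_inv_eq
    rw [← joukowsky_eq_zero_iff.1 h0, h.frobTrace_eq] at this
    exact zero_ne_one this
  have hdvd : 2 ^ (l + 2) ∣ n + n :=
    two_pow_dvd_of_joukowsky_iterate_eq_inv hz ⟨0, hw.double⟩
      (by rw [iterate_succ_apply', hzy]) hwy hθθ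
  rw [pow_succ, ← mul_two] at hdvd
  exact absurd (Nat.dvd_of_mul_dvd_mul_right two_pos hdvd) hn

lemma unitTracesWithin_of_isPeriodicPt (hn : ¬ 2 ^ (l + 1) ∣ n) (h : IsPeriodicPt φ n x)
    (hx : x ≠ 0) : UnitTracesWithin (l + 3) x := by
  have hinv := isPeriodicPt_frobenius_inv h
  rcases frobTrace_eq_zero_or_one h with ha | ha <;>
    rcases frobTrace_eq_zero_or_one hinv with hb | hb
  · exact (HasTraces.unitTracesWithin_of_zero_zero hn ⟨h, ha, hb⟩ hx).mono (by omega)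
  · exact (HasTraces.unitTracesWithin_of_zero_one hn ⟨h, ha, hb⟩).mono (by omega)
  · obtain ⟨y, hy, rfl⟩ := HasTraces.exists_joukowsky_eq ⟨h, ha, hb⟩
    exact joukowsky_inv y ▸ (hy.inv.unitTracesWithin_of_zero_one hn).joukowsky
  · exact ⟨0, by omega, x, ⟨n, h, ha, hb⟩, rfl⟩

/-- `a` is a backward orbit of `θ` avoiding `0`, except possibly at `a 0`: the junk value `θ 0 = 0`
does not come from a root of a Q-transform. -/
def IsBackwardOrbit {K : Type*} [Field K] (a : ℕ → K) : Prop :=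
  ∀ i, a (i + 1) ≠ 0 ∧ θ (a (i + 1)) = a i

lemma HasUnitTraces.exists_isBackwardOrbit (h : HasUnitTraces x) :
    ∃ a : ℕ → K, a 0 = x ∧ IsBackwardOrbit a ∧
      ∀ i, minimalPeriod φ (a (i + 1)) = 2 * minimalPeriod φ (a i) := by
  choose r hr0 hr using joukowsky_surjective (K := K)
  have horbit : IsBackwardOrbit fun i => r^[i] x := fun i => by
    simp only [iterate_succ_apply']
    exact ⟨hr0 _, hr _⟩
  have hunit : ∀ i, HasUnitTraces (r^[i] x) := fun i => by
    induction i with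
    | zero => exact h
    | succ i ih => exact HasUnitTraces.of_joukowsky ((horbit i).2 ▸ ih)
  refine ⟨_, rfl, horbit, fun i => ?_⟩
  have hi : θ (r^[i + 1] x) = r^[i] x := (horbit i).2
  rw [← hi, HasUnitTraces.minimalPeriod_eq_two_mul (hi ▸ hunit i)]

lemma HasUnitTraces.exists_isBackwardOrbit_of_iterate {s : ℕ} (hy : HasUnitTraces y)
    (h0 : ∀ j < s, θ^[j] y ≠ 0) :
    ∃ a : ℕ → K, a 0 = θ^[s] y ∧ IsBackwardOrbit a ∧
      ∀ i, s ≤ i → minimalPeriod φ (a (i + 1)) = 2 * minimalPeriod φ (a i) := by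
  induction s with
  | zero => simpa using hy.exists_isBackwardOrbit
  | succ s ih =>
    obtain ⟨a, ha0, ha, hper⟩ := ih fun j hj => h0 j (hj.trans s.lt_succ_self)
    refine ⟨fun | 0 => θ (a 0) | i + 1 => a i, by rw [ha0, iterate_succ_apply'], ?_, ?_⟩
    · rintro (_ | i)
      · exact ⟨ne_of_eq_of_ne ha0 (h0 s s.lt_succ_self), rfl⟩
      · exact ha i
    · rintro (_ | i) hi
      · omega
      · exact hper i (by omega)

theorem exists_isBackwardOrbit_minimalPeriod_eq_two_mul (hn : ¬ 2 ^ (l + 1) ∣ n)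
    (hx : IsPeriodicPt φ n x) :
    ∃ s ≤ l + 3, ∃ a : ℕ → K, a 0 = x ∧ IsBackwardOrbit a ∧
      ∀ i, s ≤ i → minimalPeriod φ (a (i + 1)) = 2 * minimalPeriod φ (a i) := by
  obtain rfl | hx0 := eq_or_ne x 0
  · refine ⟨1, by omega, ?_⟩
    simpa [joukowsky_one] using
      (hasUnitTraces_one (K := K)).exists_isBackwardOrbit_of_iterate (s := 1) (by simp)
  · obtain ⟨s, hs, y, hy, rfl⟩ := unitTracesWithin_of_isPeriodicPt hn hx hx0
    refine ⟨s, hs, hy.exists_isBackwardOrbit_of_iterate fun j hj =>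
      ne_zero_of_joukowsky_iterate_ne_zero (k := s - j) ?_⟩
    rwa [← iterate_add_apply, Nat.sub_add_cancel hj.le]

end Reaching

end CharTwo

section Polynomial

lemma natDegree_minpoly_eq_minimalPeriod_frobenius {K : Type*} [Field K] (p : ℕ) [Fact p.Prime]
    [CharP K p] [Algebra (ZMod p) K] {x : K} (hx : IsIntegral (ZMod p) x) :
    (minpoly (ZMod p) x).natDegree = minimalPeriod (frobenius K p) x := by
  refine Nat.dvd_right_iff_eq.1 fun n => ?_
  rw [(minpoly.irreducible hx).natDegree_dvd_iff_dvd_X_pow_card_pow_sub_X, minpoly.dvd_iff,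
    ← isPeriodicPt_iff_minimalPeriod_dvd, IsPeriodicPt, IsFixedPt, iterate_frobenius]
  simp [sub_eq_zero]

lemma aeval_Qtrans {K : Type*} [Field K] [Algebra (ZMod 2) K] (f : (ZMod 2)[X]) {y : K}
    (hy : y ≠ 0) : aeval y (Qtrans f) = y ^ f.natDegree * aeval (θ y) f := by
  rw [Qtrans, map_sum, aeval_eq_sum_range, Finset.mul_sum]
  refine Finset.sum_congr rfl fun i hi => ?_
  have hpow : y ^ f.natDegree = y ^ (f.natDegree - i) * y ^ i :=
    (pow_sub_mul_pow y (Finset.mem_range_succ_iff.1 hi)).symm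
  simp only [map_mul, map_pow, map_add, map_one, aeval_C, aeval_X, Algebra.smul_def]
  rw [sq_add_one_eq_mul_joukowsky hy, hpow, mul_pow]
  ring

lemma natDegree_Qtrans_le (f : (ZMod 2)[X]) : (Qtrans f).natDegree ≤ 2 * f.natDegree := by
  refine natDegree_sum_le_of_forall_le _ _ fun i hi => ?_
  have hi' := Finset.mem_range_succ_iff.1 hi
  compute_degree
  omega

lemma coeff_Qtrans_two_mul_natDegree (f : (ZMod 2)[X]) :
    (Qtrans f).coeff (2 * f.natDegree) = f.leadingCoeff := by
  have hlow : ∀ i ∈ Finset.range f.natDegree,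
      (C (f.coeff i) * X ^ (f.natDegree - i) * (X ^ 2 + 1) ^ i).coeff (2 * f.natDegree) = 0 := by
    intro i hi
    have hi' := Finset.mem_range.1 hi
    refine coeff_eq_zero_of_natDegree_lt (Nat.lt_of_le_of_lt (m := f.natDegree + i) ?_ (by omega))
    compute_degree
    omega
  have htop : ((X ^ 2 + 1) ^ f.natDegree : (ZMod 2)[X]).coeff (2 * f.natDegree) = 1 := by
    have hmonic : (X ^ 2 + 1 : (ZMod 2)[X]).Monic := by monicity!
    have hdeg : (X ^ 2 + 1 : (ZMod 2)[X]).natDegree = 2 := by compute_degree!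
    simpa [hmonic.natDegree_pow, hdeg, mul_comm] using (hmonic.pow f.natDegree).coeff_natDegree
  rw [Qtrans, finsetSum_coeff, Finset.sum_range_succ, Finset.sum_eq_zero hlow, zero_add,
    Nat.sub_self, pow_zero, mul_one, coeff_C_mul, htop, mul_one, leadingCoeff]

lemma Qtrans_monic {f : (ZMod 2)[X]} (hf : f.Monic) : (Qtrans f).Monic :=
  monic_of_natDegree_le_of_coeff_eq_one _ (natDegree_Qtrans_le f)
    ((coeff_Qtrans_two_mul_natDegree f).trans hf)

lemma minpoly_dvd_Qtrans {K : Type*} [Field K] [Algebra (ZMod 2) K] {y : K} (hy : y ≠ 0) :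
    minpoly (ZMod 2) y ∣ Qtrans (minpoly (ZMod 2) (θ y)) := by
  apply minpoly.dvd
  rw [aeval_Qtrans _ hy, minpoly.aeval, mul_zero]

lemma minpoly_eq_Qtrans {K : Type*} [Field K] [Algebra (ZMod 2) K] {y : K} (hy : y ≠ 0)
    (hint : IsIntegral (ZMod 2) y) (hdeg : (minpoly (ZMod 2) y).natDegree =
      2 * (minpoly (ZMod 2) (θ y)).natDegree) :
    minpoly (ZMod 2) y = Qtrans (minpoly (ZMod 2) (θ y)) :=
  (eq_of_monic_of_dvd_of_natDegree_le (minpoly.monic hint)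
    (Qtrans_monic (minpoly.monic (hint.add hint.inv))) (minpoly_dvd_Qtrans hy)
    (hdeg ▸ natDegree_Qtrans_le _)).symm

end Polynomial

theorem stmt_1 (n l m : ℕ) (hn : 1 ≤ n) (hm : Odd m) (hfact : n = 2 ^ l * m)
    (f0 : Polynomial (ZMod 2)) (hmon : f0.Monic) (hirr : Irreducible f0)
    (hdeg : f0.natDegree = n) :
    ∃ (s : ℕ) (F : ℕ → Polynomial (ZMod 2)),
      s ≤ l + 3 ∧ F 0 = f0 ∧
      (∀ i, (F i).Monic ∧ Irreducible (F i)) ∧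
      (∀ i, F (i + 1) ∣ Qtrans (F i)) ∧
      (∀ i, s ≤ i → F (i + 1) = Qtrans (F i)) ∧
      (∀ i, s ≤ i → (F (i + 1)).natDegree = 2 * (F i).natDegree) := by
  obtain ⟨x, hx⟩ := IsAlgClosed.exists_aeval_eq_zero (AlgebraicClosure (ZMod 2)) f0
    (degree_pos_of_irreducible hirr).ne'
  have hmin : minpoly (ZMod 2) x = f0 := (minpoly.eq_of_irreducible_of_monic hirr hx hmon).symm
  have hint (y : AlgebraicClosure (ZMod 2)) : IsIntegral (ZMod 2) y :=
    Algebra.IsIntegral.isIntegral y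
  have hn_dvd : ¬ 2 ^ (l + 1) ∣ n := by
    rw [hfact, pow_succ, Nat.mul_dvd_mul_iff_left (by positivity), ← even_iff_two_dvd]
    exact Nat.not_even_iff_odd.2 hm
  have hper : IsPeriodicPt (frobenius _ 2) n x := by
    rw [isPeriodicPt_iff_minimalPeriod_dvd,
      ← natDegree_minpoly_eq_minimalPeriod_frobenius 2 (hint x), hmin, hdeg]
  obtain ⟨s, hs, a, rfl, ha, hdouble⟩ := exists_isBackwardOrbit_minimalPeriod_eq_two_mul hn_dvd hper
  simp only [← natDegree_minpoly_eq_minimalPeriod_frobenius 2 (hint _)] at hdouble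
  refine ⟨s, fun i => minpoly (ZMod 2) (a i), hs, hmin,
    fun i => ⟨minpoly.monic (hint _), minpoly.irreducible (hint _)⟩,
    fun i => by simpa only [(ha i).2] using minpoly_dvd_Qtrans (ha i).1, fun i hi => ?_, hdouble⟩
  have hQ := minpoly_eq_Qtrans (ha i).1 (hint _) (by rw [(ha i).2, hdouble i hi])
  rwa [(ha i).2] at hQ
end

section
/- If f ∈ F_2[x] is a monic irreducible polynomial of type (C,n) with n > 1, then f^Q factors as f^Q = g_1 · g_2, where g_1 and g_2 are distinct monic irreducible polynomials of degree n over F_2 with g_2 = g_1* (the reciprocal of g_1), and, up to renaming, g_1 is of type (B,n) while g_2 is of type (C,n). -/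
open Polynomial

/-!
Let `α` be a root of `f`, so that its degree is `n` and the hypotheses on the coefficients say
`Tr α = 1` and `Tr α⁻¹ = 0`. By additive Hilbert 90 there is `y ∈ 𝔽₂(α)` with
`y ^ 2 - y = α⁻¹`, and `b = (y + 1) / y` then solves `b + b⁻¹ = α`: the roots `b`, `b⁻¹` of `f^Q`
already lie in `𝔽₂(α)` and generate it. As `Tr b + Tr b⁻¹ = 1`, exactly one of the two traces
vanishes, which both separates the minimal polynomials of `b` and `b⁻¹` and determines their
types.
-/

open IntermediateField Module

section Hilbert90

variable {F K : Type*} [Field F] [Field K] [Algebra F K] [FiniteDimensional F K]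

lemma finrank_ker_sub_id_le_one [IsGalois F K] (σ : Gal(K/F))
    (hσ : ∀ τ, τ ∈ Subgroup.zpowers σ) :
    finrank F (LinearMap.ker (σ.toLinearMap - LinearMap.id)) ≤ 1 := by
  suffices h : LinearMap.ker (σ.toLinearMap - LinearMap.id) ≤
      (⊥ : IntermediateField F K).toSubalgebra.toSubmodule from
    (Submodule.finrank_mono h).trans IntermediateField.finrank_bot.le
  intro x hx
  have hσx : σ ∈ MulAction.stabilizer Gal(K/F) x := sub_eq_zero.mp hx
  exact (IsGalois.mem_bot_iff_fixed x).mpr fun τ ↦ Subgroup.zpowers_le.mpr hσx (hσ τ)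

-- Additive Hilbert 90, by counting dimensions: both sides have codimension one.
lemma range_sub_id_eq_ker_trace [IsGalois F K] (σ : Gal(K/F))
    (hσ : ∀ τ, τ ∈ Subgroup.zpowers σ) :
    LinearMap.range (σ.toLinearMap - LinearMap.id) = LinearMap.ker (Algebra.trace F K) := by
  have hle : LinearMap.range (σ.toLinearMap - LinearMap.id) ≤
      LinearMap.ker (Algebra.trace F K) := by
    rintro _ ⟨x, rfl⟩
    simp [Algebra.trace_eq_of_algEquiv]
  refine Submodule.eq_of_le_of_finrank_le hle ?_
  have hker := finrank_ker_sub_id_le_one σ hσ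
  have hrank := LinearMap.finrank_range_add_finrank_ker (σ.toLinearMap - LinearMap.id)
  have htrace := LinearMap.finrank_range_add_finrank_ker (Algebra.trace F K)
  rw [LinearMap.range_eq_top.mpr (Algebra.trace_surjective F K), finrank_top,
    finrank_self] at htrace
  lia

lemma exists_pow_card_sub_self_eq [Fintype F] {c : K} (hc : Algebra.trace F K c = 0) :
    ∃ y : K, y ^ Fintype.card F - y = c := by
  have : Finite K := finite_of_finite F
  let σ := FiniteField.frobeniusAlgEquivOfAlgebraic F K
  have hσ (τ : Gal(K/F)) : τ ∈ Subgroup.zpowers σ := by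
    obtain ⟨i, rfl⟩ := (FiniteField.bijective_frobeniusAlgEquivOfAlgebraic_pow F K).surjective τ
    exact Subgroup.npow_mem_zpowers σ i
  exact (range_sub_id_eq_ker_trace σ hσ).ge hc

end Hilbert90

section Minpoly

variable {F K : Type*} [Field F] [Field K] [Algebra F K] {x : K}

lemma adjoin_simple_inv (x : K) : F⟮x⁻¹⟯ = F⟮x⟯ := by
  refine le_antisymm (adjoin_simple_le_iff.mpr (inv_mem (mem_adjoin_simple_self F x)))
    (adjoin_simple_le_iff.mpr ?_)
  simpa using inv_mem (mem_adjoin_simple_self F x⁻¹)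

lemma adjoin_simple_add_inv_le (x : K) : F⟮x + x⁻¹⟯ ≤ F⟮x⟯ :=
  have hx := mem_adjoin_simple_self F x
  adjoin_simple_le_iff.mpr (add_mem hx (inv_mem hx))

lemma natDegree_minpoly_inv (hx : IsIntegral F x) :
    (minpoly F x⁻¹).natDegree = (minpoly F x).natDegree := by
  rw [← adjoin.finrank hx, ← adjoin.finrank hx.inv, adjoin_simple_inv]

lemma natDegree_minpoly_add_inv_le (hx : IsIntegral F x) :
    (minpoly F (x + x⁻¹)).natDegree ≤ (minpoly F x).natDegree := by
  have : FiniteDimensional F F⟮x⟯ := adjoin.finiteDimensional hx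
  rw [← adjoin.finrank hx, ← adjoin.finrank (hx.add hx.inv)]
  exact finrank_le_of_le_right (adjoin_simple_add_inv_le x)

lemma minpoly_inv (hx : IsIntegral F x) (hx₀ : x ≠ 0) :
    minpoly F x⁻¹ = C ((minpoly F x).coeff 0)⁻¹ * (minpoly F x).reverse := by
  have hcoeff := minpoly.coeff_zero_ne_zero hx hx₀
  have hroot : aeval x⁻¹ (minpoly F x).reverse = 0 := by
    let _ := invertibleOfNonzero hx₀
    rw [← invOf_eq_inv]
    exact (eval₂_reverse_eq_zero_iff _ x _).mpr (minpoly.aeval F x)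
  have hmonic : (C ((minpoly F x).coeff 0)⁻¹ * (minpoly F x).reverse).Monic := by
    refine monic_C_mul_of_mul_leadingCoeff_eq_one ?_
    rw [reverse_leadingCoeff, trailingCoeff_eq_coeff_zero hcoeff, inv_mul_cancel₀ hcoeff]
  refine (eq_of_monic_of_dvd_of_natDegree_le (minpoly.monic hx.inv) hmonic
    (minpoly.dvd _ _ (by rw [map_mul, hroot, mul_zero])) ?_).symm
  rw [natDegree_minpoly_inv hx]
  exact (natDegree_C_mul_le _ _).trans (reverse_natDegree_le _)

variable [FiniteDimensional F K]

lemma nextCoeff_minpoly (hx : F⟮x⟯ = ⊤) : (minpoly F x).nextCoeff = -Algebra.trace F K x := by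
  rw [trace_eq_finrank_mul_minpoly_nextCoeff, hx, IntermediateField.finrank_top]
  simp

lemma coeff_one_minpoly (hx : F⟮x⟯ = ⊤) (hx₀ : x ≠ 0) :
    (minpoly F x).coeff 1 = -(minpoly F x).coeff 0 * Algebra.trace F K x⁻¹ := by
  have hmonic := minpoly.monic (IsIntegral.of_finite F x⁻¹)
  have hrev := minpoly_inv (IsIntegral.of_finite F x⁻¹) (inv_ne_zero hx₀)
  rw [inv_inv] at hrev
  rw [hrev, coeff_C_mul, coeff_C_mul, coeff_one_reverse, coeff_zero_reverse, hmonic.leadingCoeff,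
    nextCoeff_minpoly ((adjoin_simple_inv x).trans hx)]
  ring

end Minpoly

section Qtrans

lemma isMonicOfDegree_Qtrans {f : (ZMod 2)[X]} (hf : f.Monic) :
    IsMonicOfDegree (Qtrans f) (2 * f.natDegree) := by
  have hX : IsMonicOfDegree (X ^ 2 + 1 : (ZMod 2)[X]) 2 :=
    (isMonicOfDegree_X_pow (ZMod 2) 2).add_right (by simp)
  have hterm (i : ℕ) : (C (f.coeff i) * X ^ (f.natDegree - i) *
      (X ^ 2 + 1) ^ i).natDegree ≤ f.natDegree - i + 2 * i :=
    natDegree_mul_le_of_le (natDegree_C_mul_X_pow_le _ _) (hX.pow i).natDegree_eq.le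
  refine (isMonicOfDegree_iff _ _).mpr ⟨?_, ?_⟩
  · refine natDegree_sum_le_of_forall_le _ _ fun i hi ↦ (hterm i).trans ?_
    have := Finset.mem_range_succ_iff.mp hi
    lia
  · rw [Qtrans, finsetSum_coeff, Finset.sum_range_succ, Finset.sum_eq_zero, zero_add]
    · simpa [hf.coeff_natDegree] using ((isMonicOfDegree_iff _ _).mp (hX.pow f.natDegree)).2
    · intro i hi
      have := Finset.mem_range.mp hi
      exact coeff_eq_zero_of_natDegree_lt ((hterm i).trans_lt (by lia))

variable {K : Type*} [Field K] [Algebra (ZMod 2) K]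

lemma aeval_Qtrans_s3 (f : (ZMod 2)[X]) {x : K} (hx : x ≠ 0) :
    aeval x (Qtrans f) = x ^ f.natDegree * aeval (x + x⁻¹) f := by
  rw [aeval_eq_sum_range (p := f), Qtrans, map_sum, Finset.mul_sum]
  refine Finset.sum_congr rfl fun i hi ↦ ?_
  have hi : i ≤ f.natDegree := Finset.mem_range_succ_iff.mp hi
  have hsq : x ^ 2 + 1 = x * (x + x⁻¹) := by field_simp
  simp only [map_mul, map_pow, map_add, aeval_X, aeval_C, map_one, Algebra.smul_def]
  rw [hsq, mul_pow, ← pow_sub_mul_pow x hi]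
  ring

lemma Qtrans_minpoly_add_inv {x : K} (hx : IsIntegral (ZMod 2) x) (hx₀ : x ≠ 0)
    (hne : minpoly (ZMod 2) x ≠ minpoly (ZMod 2) x⁻¹) :
    Qtrans (minpoly (ZMod 2) (x + x⁻¹)) = minpoly (ZMod 2) x * minpoly (ZMod 2) x⁻¹ := by
  have hmonic := minpoly.monic hx
  have hmonic_inv := minpoly.monic hx.inv
  have hQ := isMonicOfDegree_Qtrans (minpoly.monic (hx.add hx.inv))
  have hdvd : minpoly (ZMod 2) x ∣ Qtrans (minpoly (ZMod 2) (x + x⁻¹)) :=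
    minpoly.dvd _ _ (by rw [aeval_Qtrans_s3 _ hx₀, minpoly.aeval, mul_zero])
  have hdvd_inv : minpoly (ZMod 2) x⁻¹ ∣ Qtrans (minpoly (ZMod 2) (x + x⁻¹)) :=
    minpoly.dvd _ _ (by
      rw [aeval_Qtrans_s3 _ (inv_ne_zero hx₀), inv_inv, add_comm x⁻¹, minpoly.aeval, mul_zero])
  have hcoprime : IsCoprime (minpoly (ZMod 2) x) (minpoly (ZMod 2) x⁻¹) := by
    refine (minpoly.irreducible hx).coprime_iff_not_dvd.mpr fun h ↦ hne ?_
    exact eq_of_monic_of_associated hmonic hmonic_inv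
      ((minpoly.irreducible hx).associated_of_dvd (minpoly.irreducible hx.inv) h)
  refine eq_of_monic_of_dvd_of_natDegree_le (hmonic.mul hmonic_inv) hQ.monic
    (hcoprime.mul_dvd hdvd hdvd_inv) ?_
  rw [hmonic.natDegree_mul hmonic_inv, natDegree_minpoly_inv hx, hQ.natDegree_eq, ← two_mul]
  exact Nat.mul_le_mul_left 2 (natDegree_minpoly_add_inv_le hx)

end Qtrans

section ZModTwo

variable {K : Type*} [Field K] [Algebra (ZMod 2) K] {x α : K}

lemma coeff_zero_minpoly_eq_one (hx : IsIntegral (ZMod 2) x) (hx₀ : x ≠ 0) :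
    (minpoly (ZMod 2) x).coeff 0 = 1 := by
  simpa using ZMod.pow_card_sub_one_eq_one (minpoly.coeff_zero_ne_zero hx hx₀)

lemma minpoly_inv_eq_reverse (hx : IsIntegral (ZMod 2) x) (hx₀ : x ≠ 0) :
    minpoly (ZMod 2) x⁻¹ = (minpoly (ZMod 2) x).reverse := by
  rw [minpoly_inv hx hx₀, coeff_zero_minpoly_eq_one hx hx₀, inv_one, C_1, one_mul]

variable [FiniteDimensional (ZMod 2) K]

lemma coeff_finrank_sub_one_minpoly (hx : (ZMod 2)⟮x⟯ = ⊤) :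
    (minpoly (ZMod 2) x).coeff (finrank (ZMod 2) K - 1) = Algebra.trace (ZMod 2) K x := by
  rw [← (Field.primitive_element_iff_minpoly_natDegree_eq _ x).mp hx,
    ← nextCoeff_of_natDegree_pos (minpoly.natDegree_pos (.of_finite _ x)), nextCoeff_minpoly hx,
    CharTwo.neg_eq]

lemma coeff_one_minpoly_eq_trace_inv (hx : (ZMod 2)⟮x⟯ = ⊤) (hx₀ : x ≠ 0) :
    (minpoly (ZMod 2) x).coeff 1 = Algebra.trace (ZMod 2) K x⁻¹ := by
  rw [coeff_one_minpoly hx hx₀, coeff_zero_minpoly_eq_one (.of_finite _ x) hx₀, CharTwo.neg_eq,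
    one_mul]

lemma exists_add_inv_eq (hα₀ : α ≠ 0) (hα : Algebra.trace (ZMod 2) K α⁻¹ = 0) :
    ∃ b : K, b ≠ 0 ∧ b + b⁻¹ = α := by
  have : CharP K 2 := charP_of_injective_algebraMap' (ZMod 2) 2
  obtain ⟨y, hy⟩ := exists_pow_card_sub_self_eq hα
  rw [ZMod.card, sq, ← mul_sub_one, CharTwo.sub_eq_add] at hy
  obtain ⟨hy₀, hy₁⟩ := mul_ne_zero_iff.mp (hy ▸ inv_ne_zero hα₀)
  refine ⟨(y + 1) / y, div_ne_zero hy₁ hy₀, ?_⟩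
  rw [← inv_inv α, ← hy]
  field_simp
  linear_combination (y ^ 2 + y) * CharTwo.two_eq_zero (R := K)

lemma exists_add_inv_eq_and_trace_eq (hα : Algebra.trace (ZMod 2) K α = 1)
    (hα_inv : Algebra.trace (ZMod 2) K α⁻¹ = 0) :
    ∃ b : K, b ≠ 0 ∧ b + b⁻¹ = α ∧
      Algebra.trace (ZMod 2) K b = 0 ∧ Algebra.trace (ZMod 2) K b⁻¹ = 1 := by
  have hα₀ : α ≠ 0 := ne_of_apply_ne (Algebra.trace (ZMod 2) K) (by simp [hα])
  obtain ⟨b, hb₀, rfl⟩ := exists_add_inv_eq hα₀ hα_inv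
  rw [map_add] at hα
  by_cases hb : Algebra.trace (ZMod 2) K b = 0
  · exact ⟨b, hb₀, rfl, hb, by simpa [hb] using hα⟩
  · have hb : Algebra.trace (ZMod 2) K b = 1 := by
      simpa using ZMod.pow_card_sub_one_eq_one hb
    refine ⟨b⁻¹, inv_ne_zero hb₀, by rw [inv_inv, add_comm], ?_, by rwa [inv_inv]⟩
    simpa [hb] using hα

lemma exists_Qtrans_minpoly_eq_mul (hα : (ZMod 2)⟮α⟯ = ⊤)
    (htr : Algebra.trace (ZMod 2) K α = 1) (htr_inv : Algebra.trace (ZMod 2) K α⁻¹ = 0) :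
    ∃ b : K, b ≠ 0 ∧ (ZMod 2)⟮b⟯ = ⊤ ∧
      Algebra.trace (ZMod 2) K b = 0 ∧ Algebra.trace (ZMod 2) K b⁻¹ = 1 ∧
      minpoly (ZMod 2) b ≠ minpoly (ZMod 2) b⁻¹ ∧
      Qtrans (minpoly (ZMod 2) α) = minpoly (ZMod 2) b * minpoly (ZMod 2) b⁻¹ := by
  obtain ⟨b, hb₀, rfl, hb, hb_inv⟩ := exists_add_inv_eq_and_trace_eq htr htr_inv
  have hgen : (ZMod 2)⟮b⟯ = ⊤ := top_le_iff.mp (hα.ge.trans (adjoin_simple_add_inv_le b))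
  have hgen_inv : (ZMod 2)⟮b⁻¹⟯ = ⊤ := (adjoin_simple_inv b).trans hgen
  have hne : minpoly (ZMod 2) b ≠ minpoly (ZMod 2) b⁻¹ := by
    refine ne_of_apply_ne nextCoeff ?_
    rw [nextCoeff_minpoly hgen, nextCoeff_minpoly hgen_inv, hb, hb_inv]
    decide
  exact ⟨b, hb₀, hgen, hb, hb_inv, hne, Qtrans_minpoly_add_inv (.of_finite _ b) hb₀ hne⟩

end ZModTwo

theorem stmt_3 (n : ℕ) (hn : 1 < n) (f : Polynomial (ZMod 2))
    (hmon : f.Monic) (hirr : Irreducible f) (hdeg : f.natDegree = n)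
    (hC : f.coeff (n - 1) = 1 ∧ f.coeff 1 = 0) :
    ∃ g₁ g₂ : Polynomial (ZMod 2),
      Qtrans f = g₁ * g₂ ∧ g₁ ≠ g₂ ∧ g₂ = g₁.reverse ∧
      g₁.Monic ∧ Irreducible g₁ ∧ g₁.natDegree = n ∧
      g₂.Monic ∧ Irreducible g₂ ∧ g₂.natDegree = n ∧
      (g₁.coeff (n - 1) = 0 ∧ g₁.coeff 1 = 1) ∧
      (g₂.coeff (n - 1) = 1 ∧ g₂.coeff 1 = 0) := by
  have : Fact (Irreducible f) := ⟨hirr⟩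
  have : FiniteDimensional (ZMod 2) (AdjoinRoot f) := hmon.finite_adjoinRoot
  let α := AdjoinRoot.root f
  have hα : (ZMod 2)⟮α⟯ = ⊤ := adjoin_root_eq_top f
  have hmin : minpoly (ZMod 2) α = f := by
    simp [α, AdjoinRoot.minpoly_root hirr.ne_zero, hmon.leadingCoeff]
  have hdegree {x : AdjoinRoot f} := Field.primitive_element_iff_minpoly_natDegree_eq (ZMod 2) x
  obtain rfl : finrank (ZMod 2) (AdjoinRoot f) = n := by rw [← hdegree.mp hα, hmin, hdeg]
  have htr : Algebra.trace (ZMod 2) _ α = 1 := by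
    rw [← coeff_finrank_sub_one_minpoly hα, hmin, hC.1]
  have hα₀ : α ≠ 0 := ne_of_apply_ne (Algebra.trace (ZMod 2) _) (by simp [htr])
  have htr_inv : Algebra.trace (ZMod 2) _ α⁻¹ = 0 := by
    rw [← coeff_one_minpoly_eq_trace_inv hα hα₀, hmin, hC.2]
  obtain ⟨b, hb₀, hgen, hb, hb_inv, hne, hQ⟩ := exists_Qtrans_minpoly_eq_mul hα htr htr_inv
  rw [hmin] at hQ
  have hgen_inv : (ZMod 2)⟮b⁻¹⟯ = ⊤ := (adjoin_simple_inv b).trans hgen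
  have hint : IsIntegral (ZMod 2) b := .of_finite _ b
  refine ⟨minpoly (ZMod 2) b, minpoly (ZMod 2) b⁻¹, hQ, hne, minpoly_inv_eq_reverse hint hb₀,
    minpoly.monic hint, minpoly.irreducible hint, hdegree.mp hgen,
    minpoly.monic hint.inv, minpoly.irreducible hint.inv, hdegree.mp hgen_inv, ?_, ?_⟩
  · exact ⟨by rw [coeff_finrank_sub_one_minpoly hgen, hb],
      by rw [coeff_one_minpoly_eq_trace_inv hgen hb₀, hb_inv]⟩
  · exact ⟨by rw [coeff_finrank_sub_one_minpoly hgen_inv, hb_inv],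
      by rw [coeff_one_minpoly_eq_trace_inv hgen_inv (inv_ne_zero hb₀), inv_inv, hb]⟩
end
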